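/- Assume J ≥ J_0. There exists ℓ_0 ∈ ℕ such that for all ℓ ≥ ℓ_0 one has 2^{(1+b)^ℓ J (H−ε)} ≤ #T_∞((1+b)^ℓ J, b, ε) ≤ 2^{(1+b)^ℓ J (H+ε)}. -/

import Mathlib

open scoped Classical ENNReal
open Set Filter MeasureTheory ProbabilityTheory

noncomputable section

/-- The dyadic interval `λ_{j,k} = [k 2^{-j}, (k+1) 2^{-j}]`. -/
def dyadic (j k : ℕ) : Set ℝ := Set.Icc ((k : ℝ) / 2 ^ j) (((k : ℝ) + 1) / 2 ^ j)

/-- Indices `k` of dyadic intervals of scale `j` that intersect `I`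
(the collection `I_j`). -/
def dyadicHit (I : Set ℝ) (j : ℕ) : Finset ℕ :=
  (Finset.range (2 ^ j)).filter fun k => (dyadic j k ∩ I).Nonempty

/-- Smallest number of intervals of length `ε` needed to cover `I`. -/
def coverNum (I : Set ℝ) (ε : ℝ) : ℕ :=
  sInf {n : ℕ | ∃ f : Fin n → ℝ, I ⊆ ⋃ i, Set.Icc (f i) (f i + ε)}

/-- Upper box-counting dimension of `I`:
`limsup_{ε → 0⁺} log N(ε) / (- log ε)`. -/
def upperBoxDim (I : Set ℝ) : ℝ :=
  Filter.limsup (fun ε : ℝ => Real.log (coverNum I ε) / (-Real.log ε))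
    (nhdsWithin 0 (Set.Ioi 0))

/-- The scale `⌊(1+β) j⌋` of the children of a dyadic interval of scale `j`. -/
def childScale (β : ℝ) (j : ℕ) : ℕ := ⌊(1 + β) * (j : ℝ)⌋₊

/-- Indices `k'` of dyadic intervals of scale `j'` belonging to `I_{j'}` and contained in
the dyadic interval of index `k` at scale `j`. -/
def childrenIn (I : Set ℝ) (j j' k : ℕ) : Finset ℕ :=
  (dyadicHit I j').filter fun k' => dyadic j' k' ⊆ dyadic j k

/-- The collection `SD(j,β,ε)` of intervals of `I_j` with slow duplication rate. -/
def SD (I : Set ℝ) (H β ε : ℝ) (j : ℕ) : Finset ℕ :=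
  (dyadicHit I j).filter fun k =>
    ((childrenIn I j (childScale β j) k).card : ℝ) ≤
      (2 : ℝ) ^ ((j : ℝ) * (β * H - 4 * (max 1 β) * ε))

/-- The collection `ND(j,β,ε)` of intervals of `I_j` with normal duplication rate. -/
def ND (I : Set ℝ) (H β ε : ℝ) (j : ℕ) : Finset ℕ :=
  (dyadicHit I j).filter fun k =>
    (2 : ℝ) ^ ((j : ℝ) * (β * H - 4 * (max 1 β) * ε)) ≤
        ((childrenIn I j (childScale β j) k).card : ℝ) ∧
    ((childrenIn I j (childScale β j) k).card : ℝ) ≤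
        (2 : ℝ) ^ ((j : ℝ) * (β * H + 4 * (max 1 β) * ε))

/-- The collection `FD(j,β,ε)` of intervals of `I_j` with fast duplication rate. -/
def FD (I : Set ℝ) (H β ε : ℝ) (j : ℕ) : Finset ℕ :=
  (dyadicHit I j).filter fun k =>
    (2 : ℝ) ^ ((j : ℝ) * (β * H + 4 * (max 1 β) * ε)) ≤
      ((childrenIn I j (childScale β j) k).card : ℝ)

/-- `C_β U`: the collection of all children (at scale `⌊(1+β)J⌋`, in `I_{⌊(1+β)J⌋}`)
of the intervals of a collection `U` at scale `J`. -/
def CB (I : Set ℝ) (β : ℝ) (J : ℕ) (U : Finset ℕ) : Finset ℕ :=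
  (dyadicHit I (childScale β J)).filter fun k' =>
    ∃ k ∈ U, dyadic (childScale β J) k' ⊆ dyadic J k

/-- The nested collections `T_ℓ(J,b,ε)`: `Tset I H b ε 0 J` is `T_1(J,b,ε) = ND(J,b,ε)` and
`Tset I H b ε n J` is `T_{n+1}(J,b,ε)`, defined recursively by keeping the intervals having
at least `2^{J(bH-5ε)}` children in `T_n((1+b)J,b,ε)`. -/
def Tset (I : Set ℝ) (H b ε : ℝ) : ℕ → ℕ → Finset ℕ
  | 0, J => ND I H b ε J
  | n + 1, J =>
      (Tset I H b ε n J).filter fun k =>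
        (2 : ℝ) ^ ((J : ℝ) * (b * H - 5 * ε)) ≤
          (((Tset I H b ε n (childScale b J)).filter fun k' =>
              dyadic (childScale b J) k' ⊆ dyadic J k).card : ℝ)

/-- `T_ℓ(J,b,ε)` for `ℓ ≥ 1`. -/
def T (I : Set ℝ) (H b ε : ℝ) (ℓ J : ℕ) : Finset ℕ := Tset I H b ε (ℓ - 1) J

/-- `U_ℓ(J,b,ε) = T_{ℓ-1}(J,b,ε) \ T_ℓ(J,b,ε)` for `ℓ ≥ 2`. -/
def U (I : Set ℝ) (H b ε : ℝ) (ℓ J : ℕ) : Finset ℕ :=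
  T I H b ε (ℓ - 1) J \ T I H b ε ℓ J

/-- `T_∞(J,b,ε) = ∩_{ℓ ≥ 1} T_ℓ(J,b,ε)`. -/
def Tinf (I : Set ℝ) (H b ε : ℝ) (J : ℕ) : Finset ℕ :=
  (Tset I H b ε 0 J).filter fun k => ∀ n, k ∈ Tset I H b ε n J

/-- `U_∞(J,b,ε) = ∪_{ℓ ≥ 2} U_ℓ(J,b,ε)`. -/
def Uinf (I : Set ℝ) (H b ε : ℝ) (J : ℕ) : Finset ℕ :=
  (dyadicHit I J).filter fun k => ∃ ℓ, 2 ≤ ℓ ∧ k ∈ U I H b ε ℓ J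

/-- The union `Ũ` of the dyadic intervals (at scale `j`) of a collection `U`. -/
def tilde (j : ℕ) (U : Finset ℕ) : Set ℝ := ⋃ k ∈ U, dyadic j k

/-- The integer scale `⌊(1+b)^ℓ J⌋`. -/
def rscale (b : ℝ) (J ℓ : ℕ) : ℕ := ⌊(1 + b) ^ ℓ * (J : ℝ)⌋₊

/-!
The upper bound holds because `T_∞ ⊆ ND`. For the lower bound, take `s < H` close to `H`. Since
`μH[s] I = ∞`, at a small enough scale there is an outer measure `ν` with `ν I > 2` and
`ν λ ≤ |λ| ^ s` for all short intervals `λ`. The part of `I` lost when passing from `I_J` to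
`T_{n+1}(J)` is covered by the intervals of `FD`, the children of those of `SD`, the few children
in `T_n((1+b)J)` of the intervals of `ND` with too few such children, and the part lost when
passing from `I_{(1+b)J}` to `T_n((1+b)J)`. The counting hypotheses give the first three pieces
`ν`-measure `O(2 ^ (-εJ))`, so iterating along the scales, which grow by at least one each time,
bounds the total loss by the tail of a geometric series, uniformly in `n`. For large `J` it is at
most `1`, so the intervals of `T_∞(J)` carry measure at least `1`, and there must be at least
`2 ^ (sJ)` of them. Taking `s > H - ε` leaves room to absorb the integer parts.
-/

theorem exists_outerMeasure_of_lt_dimH {X : Type*} [EMetricSpace X] {S : Set X} {d : NNReal}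
    (hd : (d : ℝ≥0∞) < dimH S) {M : ℝ≥0∞} (hM : M < ∞) :
    ∃ (ν : OuterMeasure X) (r : ℝ≥0∞), 0 < r ∧ M < ν S ∧
      ∀ A : Set X, Metric.ediam A ≤ r → ν A ≤ Metric.ediam A ^ (d : ℝ) := by
  borelize X
  have htop : OuterMeasure.mkMetric' (fun A : Set X => Metric.ediam A ^ (d : ℝ)) S = ∞ := by
    rw [← hausdorffMeasure_of_lt_dimH hd, Measure.hausdorffMeasure,
      ← Measure.coe_toOuterMeasure, Measure.mkMetric_toOuterMeasure, OuterMeasure.mkMetric]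
  have hlim := OuterMeasure.mkMetric'.tendsto_pre_nat
    (fun A : Set X => Metric.ediam A ^ (d : ℝ)) S
  rw [htop] at hlim
  obtain ⟨n, hn⟩ := (hlim.eventually (lt_mem_nhds hM)).exists
  exact ⟨_, (n : ℝ≥0∞)⁻¹, by simp, hn, fun A hA => OuterMeasure.mkMetric'.pre_le hA⟩

theorem eventually_le_tsum_tail {f : ℕ → ℕ → ℝ≥0∞} {e : ℕ → ℝ≥0∞} {σ : ℕ → ℕ}
    (hσ : ∀ᶠ j in atTop, j < σ j) (hzero : ∀ᶠ j in atTop, f 0 j ≤ e j)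
    (hsucc : ∀ᶠ j in atTop, ∀ n, f (n + 1) j ≤ e j + f n (σ j)) :
    ∀ᶠ j in atTop, ∀ n, f n j ≤ ∑' i, e (i + j) := by
  obtain ⟨j₀, hj₀⟩ := eventually_atTop.1 (hσ.and (hzero.and hsucc))
  have hhead (j : ℕ) : ∑' i, e (i + j) = e j + ∑' i, e (i + (j + 1)) := by
    simpa only [zero_add, add_assoc, add_comm 1 j] using
      tsum_eq_zero_add' (f := fun i => e (i + j)) ENNReal.summable
  have htail : Antitone fun j => ∑' i, e (i + j) :=
    antitone_nat_of_succ_le fun j => (hhead j).symm ▸ le_add_self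
  filter_upwards [eventually_ge_atTop j₀] with j hj n
  induction n generalizing j with
  | zero => exact (hj₀ j hj).2.1.trans ((hhead j).symm ▸ le_self_add)
  | succ n ih =>
    obtain ⟨hlt, -, hstep⟩ := hj₀ j hj
    calc f (n + 1) j ≤ e j + f n (σ j) := hstep n
      _ ≤ e j + ∑' i, e (i + (j + 1)) := by
        gcongr
        exact (ih _ (hj.trans hlt.le)).trans (htail hlt)
      _ = ∑' i, e (i + j) := (hhead j).symm

theorem eventually_mul_le_floor_mul {s t : ℝ} (hs : 0 ≤ s) (hts : t < s) :
    ∀ᶠ x : ℝ in atTop, x * t ≤ ⌊x⌋₊ * s := by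
  filter_upwards [eventually_ge_atTop (s / (s - t))] with x hx
  rw [div_le_iff₀ (sub_pos.2 hts)] at hx
  nlinarith [Nat.lt_floor_add_one x]

section Dyadic

variable {I : Set ℝ} {j j' k : ℕ} {x : ℝ}

theorem dyadic_eq_union (j k : ℕ) :
    dyadic j k = dyadic (j + 1) (2 * k) ∪ dyadic (j + 1) (2 * k + 1) := by
  have hleft : ((2 * k : ℕ) : ℝ) / 2 ^ (j + 1) = k / 2 ^ j := by
    push_cast; field_simp; ring
  have hright : (((2 * k : ℕ) : ℝ) + 1 + 1) / 2 ^ (j + 1) = (k + 1) / 2 ^ j := by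
    push_cast; field_simp; ring
  rw [dyadic, dyadic, dyadic, Nat.cast_succ, Icc_union_Icc_eq_Icc, hleft, hright] <;>
    · gcongr
      linarith

theorem ediam_dyadic (j k : ℕ) :
    Metric.ediam (dyadic j k) = ENNReal.ofReal ((2 : ℝ) ^ (-(j : ℝ))) := by
  rw [dyadic, Real.ediam_Icc, Real.rpow_neg zero_le_two, Real.rpow_natCast]
  congr 1
  ring

theorem mem_dyadicHit : k ∈ dyadicHit I j ↔ k < 2 ^ j ∧ (dyadic j k ∩ I).Nonempty := by
  rw [dyadicHit, Finset.mem_filter, Finset.mem_range]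

theorem mem_tilde {V : Finset ℕ} : x ∈ tilde j V ↔ ∃ k ∈ V, x ∈ dyadic j k := by
  simp only [tilde, mem_iUnion, exists_prop]

theorem exists_mem_childrenIn (hj : j ≤ j') (hk : k ∈ dyadicHit I j) (hxI : x ∈ I)
    (hx : x ∈ dyadic j k) : ∃ k' ∈ childrenIn I j j' k, x ∈ dyadic j' k' := by
  simp only [childrenIn, Finset.mem_filter, and_assoc]
  induction j', hj using Nat.le_induction with
  | base => exact ⟨k, hk, subset_rfl, hx⟩
  | succ i _ ih =>
    obtain ⟨k', hk', hsub, hx'⟩ := ih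
    have hlt := (mem_dyadicHit.1 hk').1
    have hunion := dyadic_eq_union i k'
    rcases hunion ▸ hx' with hl | hr
    · exact ⟨2 * k', mem_dyadicHit.2 ⟨by omega, x, hl, hxI⟩,
        (hunion ▸ subset_union_left).trans hsub, hl⟩
    · exact ⟨2 * k' + 1, mem_dyadicHit.2 ⟨by omega, x, hr, hxI⟩,
        (hunion ▸ subset_union_right).trans hsub, hr⟩

theorem dyadicHit_zero (hI : I ⊆ Icc 0 1) (hne : I.Nonempty) : dyadicHit I 0 = {0} := by
  have hinter : dyadic 0 0 ∩ I = I := inter_eq_right.2 (by simpa [dyadic] using hI)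
  ext k
  rw [mem_dyadicHit, pow_zero, Nat.lt_one_iff, Finset.mem_singleton]
  refine ⟨And.left, ?_⟩
  rintro rfl
  exact ⟨rfl, hinter.symm ▸ hne⟩

theorem subset_tilde_dyadicHit (hI : I ⊆ Icc 0 1) (j : ℕ) : I ⊆ tilde j (dyadicHit I j) := by
  intro x hx
  have hroot : 0 ∈ dyadicHit I 0 := by simp [dyadicHit_zero hI ⟨x, hx⟩]
  have hxroot : x ∈ dyadic 0 0 := by simpa [dyadic] using hI hx
  obtain ⟨k, hk, hxk⟩ := exists_mem_childrenIn j.zero_le hroot hx hxroot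
  exact mem_tilde.2 ⟨k, (Finset.mem_filter.1 hk).1, hxk⟩

end Dyadic

section Growth

variable {ν : OuterMeasure ℝ} {I : Set ℝ} {j : ℕ} {s : ℝ}

/-- Frostman's growth condition with exponent `s` for an outer measure `ν`, restricted to the
dyadic intervals of scale `j`. -/
def HasDyadicGrowth (ν : OuterMeasure ℝ) (s : ℝ) (j : ℕ) : Prop :=
  ∀ k, ν (dyadic j k) ≤ ENNReal.ofReal ((2 : ℝ) ^ (-((j : ℝ) * s)))

theorem exists_hasDyadicGrowth_of_lt_dimH (hs : 0 ≤ s) (hI : ENNReal.ofReal s < dimH I)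
    {M : ℝ≥0∞} (hM : M < ∞) :
    ∃ ν : OuterMeasure ℝ, M < ν I ∧ ∀ᶠ j in atTop, HasDyadicGrowth ν s j := by
  obtain ⟨ν, r, hr, hνI, hν⟩ := exists_outerMeasure_of_lt_dimH (d := s.toNNReal) hI hM
  have hlim : Tendsto (fun j : ℕ => ENNReal.ofReal ((2 : ℝ) ^ (-(j : ℝ)))) atTop (nhds 0) := by
    rw [← ENNReal.ofReal_zero]
    exact ENNReal.tendsto_ofReal ((tendsto_rpow_atBot_of_base_gt_one 2 one_lt_two).comp
      (tendsto_neg_atTop_atBot.comp tendsto_natCast_atTop_atTop))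
  refine ⟨ν, hνI, ?_⟩
  filter_upwards [hlim.eventually (ge_mem_nhds hr)] with j hj k
  calc ν (dyadic j k) ≤ Metric.ediam (dyadic j k) ^ (s.toNNReal : ℝ) :=
        hν _ ((ediam_dyadic j k).trans_le hj)
    _ = ENNReal.ofReal ((2 : ℝ) ^ (-((j : ℝ) * s))) := by
      rw [ediam_dyadic, ENNReal.ofReal_rpow_of_pos (by positivity),
        ← Real.rpow_mul zero_le_two, Real.coe_toNNReal s hs, neg_mul]

theorem HasDyadicGrowth.measure_tilde_le (hν : HasDyadicGrowth ν s j) (V : Finset ℕ) :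
    ν (tilde j V) ≤ ENNReal.ofReal (V.card * (2 : ℝ) ^ (-((j : ℝ) * s))) := by
  calc ν (tilde j V) ≤ ∑ k ∈ V, ν (dyadic j k) := measure_biUnion_finset_le V _
    _ ≤ V.card • ENNReal.ofReal ((2 : ℝ) ^ (-((j : ℝ) * s))) :=
      Finset.sum_le_card_nsmul V _ _ fun k _ => hν k
    _ = _ := by
      rw [nsmul_eq_mul, ENNReal.ofReal_mul (Nat.cast_nonneg _), ENNReal.ofReal_natCast]

theorem HasDyadicGrowth.measure_tilde_le_rpow (hν : HasDyadicGrowth ν s j) {V : Finset ℕ}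
    {a c : ℝ} (hV : (V.card : ℝ) ≤ (2 : ℝ) ^ a) (hac : a - j * s ≤ c) :
    ν (tilde j V) ≤ ENNReal.ofReal ((2 : ℝ) ^ c) := by
  refine (hν.measure_tilde_le V).trans (ENNReal.ofReal_le_ofReal ?_)
  calc (V.card : ℝ) * 2 ^ (-((j : ℝ) * s)) ≤ 2 ^ a * 2 ^ (-((j : ℝ) * s)) := by gcongr
    _ = 2 ^ (a - j * s) := by rw [← Real.rpow_add two_pos, sub_eq_add_neg]
    _ ≤ 2 ^ c := Real.rpow_le_rpow_of_exponent_le one_le_two hac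

theorem HasDyadicGrowth.rpow_le_card (hν : HasDyadicGrowth ν s j) {V : Finset ℕ}
    (hV : 1 ≤ ν (tilde j V)) : (2 : ℝ) ^ ((j : ℝ) * s) ≤ V.card := by
  have hone := ENNReal.one_le_ofReal.1 (hV.trans (hν.measure_tilde_le V))
  rwa [Real.rpow_neg zero_le_two, ← div_eq_mul_inv, one_le_div (by positivity)] at hone

end Growth

section ChildScale

variable {b : ℝ} {J : ℕ}

theorem mul_le_childScale_add_one (b : ℝ) (J : ℕ) : (1 + b) * J ≤ childScale b J + 1 :=
  (Nat.lt_floor_add_one _).le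

theorem le_childScale (hb : 0 ≤ b) (J : ℕ) : J ≤ childScale b J :=
  Nat.le_floor (le_mul_of_one_le_left J.cast_nonneg (by linarith))

theorem eventually_lt_childScale (hb : 0 < b) : ∀ᶠ J in atTop, J < childScale b J := by
  filter_upwards [(tendsto_natCast_atTop_atTop.const_mul_atTop hb).eventually_ge_atTop 1]
    with J hJ
  refine Nat.le_floor ?_
  push_cast
  linarith

theorem tendsto_childScale (hb : 0 ≤ b) : Tendsto (childScale b) atTop atTop :=
  tendsto_atTop_mono (le_childScale hb) tendsto_id

theorem le_rscale (hb : 0 ≤ b) (J ℓ : ℕ) : J ≤ rscale b J ℓ :=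
  Nat.le_floor (le_mul_of_one_le_left J.cast_nonneg (one_le_pow₀ (by linarith)))

theorem rscale_le (hb : 0 ≤ b) (J ℓ : ℕ) : (rscale b J ℓ : ℝ) ≤ (1 + b) ^ ℓ * J :=
  Nat.floor_le (by positivity)

theorem tendsto_one_add_pow_mul_atTop (hb : 0 < b) (hJ : 0 < J) :
    Tendsto (fun ℓ : ℕ => (1 + b) ^ ℓ * (J : ℝ)) atTop atTop :=
  (tendsto_pow_atTop_atTop_of_one_lt (by linarith)).atTop_mul_const (Nat.cast_pos.2 hJ)

theorem tendsto_rscale (hb : 0 < b) (hJ : 0 < J) : Tendsto (rscale b J) atTop atTop :=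
  tendsto_nat_floor_atTop.comp (tendsto_one_add_pow_mul_atTop hb hJ)

end ChildScale

section Tset

variable {I : Set ℝ} {H b ε : ℝ} {n J k : ℕ}

/-- The members of a collection `V` at scale `j'` that lie in the dyadic interval of index `k`
at scale `j`, so that `childrenIn I j j' k` is `descendants (dyadicHit I j') j j' k`. -/
def descendants (V : Finset ℕ) (j j' k : ℕ) : Finset ℕ :=
  V.filter fun k' => dyadic j' k' ⊆ dyadic j k

theorem Tset_antitone (I : Set ℝ) (H b ε : ℝ) (J : ℕ) :
    Antitone fun n => Tset I H b ε n J :=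
  antitone_nat_of_succ_le fun _ => Finset.filter_subset _ _

theorem mem_Tset_succ : k ∈ Tset I H b ε (n + 1) J ↔ k ∈ ND I H b ε J ∧
    (2 : ℝ) ^ ((J : ℝ) * (b * H - 5 * ε)) ≤
      (descendants (Tset I H b ε n (childScale b J)) J (childScale b J) k).card := by
  induction n with
  | zero => exact Finset.mem_filter
  | succ n ih =>
    refine Finset.mem_filter.trans ⟨fun h => ⟨(ih.1 h.1).1, h.2⟩,
      fun h => ⟨ih.2 ⟨h.1, h.2.trans ?_⟩, h.2⟩⟩
    exact_mod_cast Finset.card_le_card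
      (Finset.filter_subset_filter _ (Tset_antitone I H b ε _ n.le_succ))

theorem exists_Tset_eq_Tinf (I : Set ℝ) (H b ε : ℝ) (J : ℕ) :
    ∃ n, Tset I H b ε n J = Tinf I H b ε J := by
  obtain ⟨n, hn⟩ := WellFoundedGT.monotone_chain_condition
    (⟨fun n => OrderDual.toDual (Tset I H b ε n J), Tset_antitone I H b ε J⟩ :
      ℕ →o (Finset ℕ)ᵒᵈ)
  refine ⟨n, Finset.Subset.antisymm (fun k hk => ?_) fun k hk => (Finset.mem_filter.1 hk).2 n⟩
  refine Finset.mem_filter.2 ⟨Tset_antitone I H b ε J n.zero_le hk, fun m => ?_⟩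
  rcases le_total m n with hmn | hnm
  · exact Tset_antitone I H b ε J hmn hk
  · exact (OrderDual.toDual_inj.1 (hn m hnm)).subset hk

theorem zero_mem_Tinf_zero (hI : dyadicHit I 0 = {0}) : 0 ∈ Tinf I H b ε 0 := by
  have hscale : childScale b 0 = 0 := by simp [childScale]
  have hT (n : ℕ) : 0 ∈ Tset I H b ε n 0 := by
    induction n with
    | zero => simp [Tset, ND, childrenIn, hscale, hI, Finset.filter_singleton]
    | succ n ih =>
      refine Finset.mem_filter.2 ⟨ih, ?_⟩
      rw [hscale, Nat.cast_zero, zero_mul, Real.rpow_zero, Nat.one_le_cast, Finset.one_le_card]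
      exact ⟨0, Finset.mem_filter.2 ⟨ih, subset_rfl⟩⟩
  exact Finset.mem_filter.2 ⟨hT 0, hT⟩

end Tset

section Discarded

variable {I : Set ℝ} {H b ε s : ℝ} {n J : ℕ} {ν : OuterMeasure ℝ}

/-- The part of `I` covered by intervals of `I_J` that have been removed from `T_{n+1}(J,b,ε)`. -/
def discarded (I : Set ℝ) (H b ε : ℝ) (n J : ℕ) : Set ℝ :=
  I ∩ tilde J (dyadicHit I J \ Tset I H b ε n J)

/-- The children, lying in `T_{n+1}((1+b)J,b,ε)`, of the intervals of `ND(J,b,ε)` that have too few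
such children to belong to `T_{n+2}(J,b,ε)`. -/
def sparseChildren (I : Set ℝ) (H b ε : ℝ) (n J : ℕ) : Finset ℕ :=
  (ND I H b ε J \ Tset I H b ε (n + 1) J).biUnion
    (descendants (Tset I H b ε n (childScale b J)) J (childScale b J))

theorem subset_discarded_union (hI : I ⊆ Icc 0 1) (n J : ℕ) :
    I ⊆ discarded I H b ε n J ∪ tilde J (Tset I H b ε n J) := by
  intro x hx
  obtain ⟨k, hk, hxk⟩ := mem_tilde.1 (subset_tilde_dyadicHit hI J hx)
  by_cases hT : k ∈ Tset I H b ε n J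
  · exact .inr (mem_tilde.2 ⟨k, hT, hxk⟩)
  · exact .inl ⟨hx, mem_tilde.2 ⟨k, Finset.mem_sdiff.2 ⟨hk, hT⟩, hxk⟩⟩

theorem mem_SD_or_mem_FD_of_notMem_ND {k : ℕ} (hk : k ∈ dyadicHit I J)
    (hND : k ∉ ND I H b ε J) : k ∈ SD I H b ε J ∨ k ∈ FD I H b ε J := by
  simp only [SD, ND, FD, Finset.mem_filter, hk, true_and, not_and_or, not_le] at hND ⊢
  exact hND.imp le_of_lt le_of_lt

theorem discarded_zero_subset (hb : 0 ≤ b) (J : ℕ) :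
    discarded I H b ε 0 J ⊆
      tilde J (FD I H b ε J) ∪ tilde (childScale b J) (CB I b J (SD I H b ε J)) := by
  rintro x ⟨hxI, hx⟩
  obtain ⟨k, hk, hxk⟩ := mem_tilde.1 hx
  obtain ⟨hk, hND⟩ := Finset.mem_sdiff.1 hk
  rcases mem_SD_or_mem_FD_of_notMem_ND hk hND with hSD | hFD
  · obtain ⟨k', hk', hxk'⟩ := exists_mem_childrenIn (le_childScale hb J) hk hxI hxk
    obtain ⟨hhit, hsub⟩ := Finset.mem_filter.1 hk'
    exact .inr (mem_tilde.2 ⟨k', Finset.mem_filter.2 ⟨hhit, k, hSD, hsub⟩, hxk'⟩)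
  · exact .inl (mem_tilde.2 ⟨k, hFD, hxk⟩)

theorem discarded_succ_subset (hb : 0 ≤ b) (n J : ℕ) :
    discarded I H b ε (n + 1) J ⊆ discarded I H b ε 0 J ∪
      tilde (childScale b J) (sparseChildren I H b ε n J) ∪
        discarded I H b ε n (childScale b J) := by
  rintro x ⟨hxI, hx⟩
  obtain ⟨k, hk, hxk⟩ := mem_tilde.1 hx
  obtain ⟨hk, hkT⟩ := Finset.mem_sdiff.1 hk
  by_cases hND : k ∈ ND I H b ε J
  · obtain ⟨k', hk', hxk'⟩ := exists_mem_childrenIn (le_childScale hb J) hk hxI hxk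
    obtain ⟨hhit, hsub⟩ := Finset.mem_filter.1 hk'
    by_cases hT : k' ∈ Tset I H b ε n (childScale b J)
    · refine .inl (.inr (mem_tilde.2 ⟨k', Finset.mem_biUnion.2 ⟨k, ?_, ?_⟩, hxk'⟩))
      · exact Finset.mem_sdiff.2 ⟨hND, hkT⟩
      · exact Finset.mem_filter.2 ⟨hT, hsub⟩
    · exact .inr ⟨hxI, mem_tilde.2 ⟨k', Finset.mem_sdiff.2 ⟨hhit, hT⟩, hxk'⟩⟩
  · exact .inl (.inl ⟨hxI, mem_tilde.2 ⟨k, Finset.mem_sdiff.2 ⟨hk, hND⟩, hxk⟩⟩)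

theorem card_sparseChildren_le (I : Set ℝ) (H b ε : ℝ) (n J : ℕ) :
    ((sparseChildren I H b ε n J).card : ℝ) ≤
      (ND I H b ε J).card * (2 : ℝ) ^ ((J : ℝ) * (b * H - 5 * ε)) := by
  have hfew : ∀ k ∈ ND I H b ε J \ Tset I H b ε (n + 1) J,
      ((descendants (Tset I H b ε n (childScale b J)) J (childScale b J) k).card : ℝ) ≤
        (2 : ℝ) ^ ((J : ℝ) * (b * H - 5 * ε)) := by
    intro k hk
    obtain ⟨hND, hT⟩ := Finset.mem_sdiff.1 hk
    exact (not_le.1 fun h => hT (mem_Tset_succ.2 ⟨hND, h⟩)).le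
  calc ((sparseChildren I H b ε n J).card : ℝ)
      ≤ ∑ k ∈ ND I H b ε J \ Tset I H b ε (n + 1) J,
          ((descendants (Tset I H b ε n (childScale b J)) J (childScale b J) k).card : ℝ) :=
        mod_cast Finset.card_biUnion_le
    _ ≤ (ND I H b ε J \ Tset I H b ε (n + 1) J).card *
          (2 : ℝ) ^ ((J : ℝ) * (b * H - 5 * ε)) := by
        simpa only [nsmul_eq_mul] using Finset.sum_le_card_nsmul _ _ _ hfew
    _ ≤ _ := by gcongr; exact Finset.sdiff_subset

/-- The upper bounds on the numbers of intervals of scale `j` with normal and fast duplication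
rate, and on the number of children of those with slow duplication rate. -/
structure DuplicationBounds (I : Set ℝ) (H b ε : ℝ) (j : ℕ) : Prop where
  card_ND_le : ((ND I H b ε j).card : ℝ) ≤ (2 : ℝ) ^ ((j : ℝ) * (H + ε))
  card_FD_le : ((FD I H b ε j).card : ℝ) ≤ (2 : ℝ) ^ ((j : ℝ) * (H - 2 * ε))
  card_CB_SD_le : ((CB I b j (SD I H b ε j)).card : ℝ) ≤
    (2 : ℝ) ^ ((j : ℝ) * (1 + b) * (H - 3 * ε))

-- The factor `2 ^ s` pays for rounding `(1 + b) * J` down to the integer `childScale b J`.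
theorem measure_discarded_zero_le (hb : 0 ≤ b) (hε : 0 ≤ ε) (hs : 0 ≤ s) (hsH : H - s ≤ ε)
    (hI : DuplicationBounds I H b ε J) (hν : HasDyadicGrowth ν s J)
    (hν' : HasDyadicGrowth ν s (childScale b J)) :
    ν (discarded I H b ε 0 J) ≤ 2 * ENNReal.ofReal ((2 : ℝ) ^ (s - ε * J)) := by
  have hFD : (J : ℝ) * (H - 2 * ε) - J * s ≤ s - ε * J := by
    nlinarith [mul_le_mul_of_nonneg_left hsH J.cast_nonneg]
  have hSD : (J : ℝ) * (1 + b) * (H - 3 * ε) - childScale b J * s ≤ s - ε * J := by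
    have hchild := mul_le_mul_of_nonneg_right (mul_le_childScale_add_one b J) hs
    have hJb : 0 ≤ (J : ℝ) * (1 + b) := by positivity
    have hJbε : 0 ≤ (J : ℝ) * b * ε := by positivity
    have hJε : 0 ≤ (J : ℝ) * ε := by positivity
    linarith [mul_le_mul_of_nonneg_left hsH hJb]
  calc ν (discarded I H b ε 0 J)
      ≤ ν (tilde J (FD I H b ε J)) + ν (tilde (childScale b J) (CB I b J (SD I H b ε J))) :=
        (measure_mono (discarded_zero_subset hb J)).trans (measure_union_le _ _)
    _ ≤ _ := by
        rw [two_mul]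
        exact add_le_add (hν.measure_tilde_le_rpow hI.card_FD_le hFD)
          (hν'.measure_tilde_le_rpow hI.card_CB_SD_le hSD)

theorem measure_sparseChildren_le (hs : 0 ≤ s) (hsH : (1 + b) * (H - s) ≤ 3 * ε)
    (hI : DuplicationBounds I H b ε J) (hν : HasDyadicGrowth ν s (childScale b J)) (n : ℕ) :
    ν (tilde (childScale b J) (sparseChildren I H b ε n J)) ≤
      ENNReal.ofReal ((2 : ℝ) ^ (s - ε * J)) := by
  have hcard : ((sparseChildren I H b ε n J).card : ℝ) ≤
      (2 : ℝ) ^ ((J : ℝ) * (H + ε) + J * (b * H - 5 * ε)) := by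
    rw [Real.rpow_add two_pos]
    exact (card_sparseChildren_le I H b ε n J).trans (by gcongr; exact hI.card_ND_le)
  refine hν.measure_tilde_le_rpow hcard ?_
  have hchild := mul_le_mul_of_nonneg_right (mul_le_childScale_add_one b J) hs
  linarith [mul_le_mul_of_nonneg_left hsH J.cast_nonneg]

theorem measure_discarded_succ_le (hb : 0 ≤ b) (hε : 0 ≤ ε) (hs : 0 ≤ s) (hsH : H - s ≤ ε)
    (hsHb : (1 + b) * (H - s) ≤ 3 * ε) (hI : DuplicationBounds I H b ε J)
    (hν : HasDyadicGrowth ν s J) (hν' : HasDyadicGrowth ν s (childScale b J)) (n : ℕ) :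
    ν (discarded I H b ε (n + 1) J) ≤ 3 * ENNReal.ofReal ((2 : ℝ) ^ (s - ε * J)) +
      ν (discarded I H b ε n (childScale b J)) := by
  calc ν (discarded I H b ε (n + 1) J)
      ≤ ν (discarded I H b ε 0 J) + ν (tilde (childScale b J) (sparseChildren I H b ε n J)) +
          ν (discarded I H b ε n (childScale b J)) :=
        (measure_mono (discarded_succ_subset hb n J)).trans <|
          (measure_union_le _ _).trans <| by gcongr; exact measure_union_le _ _
    _ ≤ 2 * ENNReal.ofReal ((2 : ℝ) ^ (s - ε * J)) + ENNReal.ofReal ((2 : ℝ) ^ (s - ε * J)) +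
          ν (discarded I H b ε n (childScale b J)) := by
        gcongr
        · exact measure_discarded_zero_le hb hε hs hsH hI hν hν'
        · exact measure_sparseChildren_le hs hsHb hI hν' n
    _ = _ := by ring

theorem tsum_ofReal_two_rpow_sub_ne_top (hε : 0 < ε) (s : ℝ) :
    ∑' i : ℕ, ENNReal.ofReal ((2 : ℝ) ^ (s - ε * i)) ≠ ∞ := by
  have hratio : (2 : ℝ) ^ (-ε) < 1 := Real.rpow_lt_one_of_one_lt_of_neg one_lt_two (by linarith)
  have hterm (i : ℕ) : (2 : ℝ) ^ (s - ε * i) = 2 ^ s * (2 ^ (-ε)) ^ i := by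
    rw [← Real.rpow_mul_natCast zero_le_two, ← Real.rpow_add two_pos, neg_mul, sub_eq_add_neg]
  simp only [hterm]
  exact ((summable_geometric_of_lt_one (by positivity) hratio).mul_left _).tsum_ofReal_ne_top

theorem eventually_measure_discarded_le (hb : 0 < b) (hε : 0 < ε) (hs : 0 ≤ s)
    (hsH : H - s ≤ ε) (hsHb : (1 + b) * (H - s) ≤ 3 * ε)
    (hI : ∀ᶠ j in atTop, DuplicationBounds I H b ε j)
    (hν : ∀ᶠ j in atTop, HasDyadicGrowth ν s j) {c : ℝ≥0∞} (hc : 0 < c) :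
    ∀ᶠ J in atTop, ∀ n, ν (discarded I H b ε n J) ≤ c := by
  set e : ℕ → ℝ≥0∞ := fun i => 3 * ENNReal.ofReal ((2 : ℝ) ^ (s - ε * i))
  have hsum : ∑' i, e i ≠ ∞ := by
    rw [ENNReal.tsum_mul_left]
    exact ENNReal.mul_ne_top ENNReal.ofNat_ne_top (tsum_ofReal_two_rpow_sub_ne_top hε s)
  have hν' := (tendsto_childScale hb.le).eventually hν
  have hzero : ∀ᶠ J in atTop, ν (discarded I H b ε 0 J) ≤ e J := by
    filter_upwards [hI, hν, hν'] with J hIJ hνJ hνJ'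
    refine (measure_discarded_zero_le hb.le hε.le hs hsH hIJ hνJ hνJ').trans ?_
    exact mul_le_mul_left (by norm_num) _
  have hsucc : ∀ᶠ J in atTop, ∀ n, ν (discarded I H b ε (n + 1) J) ≤
      e J + ν (discarded I H b ε n (childScale b J)) := by
    filter_upwards [hI, hν, hν'] with J hIJ hνJ hνJ'
    exact measure_discarded_succ_le hb.le hε.le hs hsH hsHb hIJ hνJ hνJ'
  filter_upwards [eventually_le_tsum_tail (f := fun n J => ν (discarded I H b ε n J))
    (eventually_lt_childScale hb) hzero hsucc,
    (ENNReal.tendsto_sum_nat_add e hsum).eventually (ge_mem_nhds hc)] with J hle htail n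
  exact (hle n).trans htail

theorem eventually_one_le_measure_tilde_Tinf (hIsub : I ⊆ Icc 0 1) (hνI : 2 ≤ ν I)
    (hdisc : ∀ᶠ J in atTop, ∀ n, ν (discarded I H b ε n J) ≤ 1) :
    ∀ᶠ J in atTop, 1 ≤ ν (tilde J (Tinf I H b ε J)) := by
  filter_upwards [hdisc] with J hJ
  obtain ⟨n, hn⟩ := exists_Tset_eq_Tinf I H b ε J
  refine (ENNReal.add_le_add_iff_left ENNReal.one_ne_top).1 ?_
  calc 1 + 1 = (2 : ℝ≥0∞) := one_add_one_eq_two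
    _ ≤ ν I := hνI
    _ ≤ ν (discarded I H b ε n J) + ν (tilde J (Tset I H b ε n J)) :=
      (measure_mono (subset_discarded_union hIsub n J)).trans (measure_union_le _ _)
    _ ≤ 1 + ν (tilde J (Tinf I H b ε J)) := by rw [hn]; gcongr; exact hJ n

end Discarded

section Cardinality

variable {I : Set ℝ} {H b ε : ℝ} {J : ℕ}

theorem card_Tinf_le_card_ND : (Tinf I H b ε J).card ≤ (ND I H b ε J).card :=
  Finset.card_le_card (Finset.filter_subset _ _)

theorem eventually_rpow_le_card_Tinf (hIsub : I ⊆ Icc 0 1) (hH : 0 < H)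
    (hdim : ENNReal.ofReal H ≤ dimH I) (hb : 0 < b) (hε : 0 < ε)
    (hI : ∀ᶠ j in atTop, DuplicationBounds I H b ε j) {t : ℝ} (ht : t < H) :
    ∀ᶠ j : ℕ in atTop, (2 : ℝ) ^ ((j : ℝ) * t) ≤ (Tinf I H b ε j).card := by
  have hδ : 0 < ε / (1 + b) := by positivity
  obtain ⟨s, hlo, hsH⟩ : ∃ s, max (max t 0) (H - ε / (1 + b)) < s ∧ s < H :=
    exists_between (max_lt (max_lt ht hH) (by linarith))
  simp only [max_lt_iff] at hlo
  obtain ⟨⟨hts, hs⟩, hgap⟩ := hlo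
  have hsHb : (1 + b) * (H - s) ≤ ε := by
    rw [mul_comm, ← le_div_iff₀ (by positivity)]
    linarith
  have hsHε : H - s ≤ ε := by nlinarith
  obtain ⟨ν, hνI, hν⟩ := exists_hasDyadicGrowth_of_lt_dimH hs.le
    (((ENNReal.ofReal_lt_ofReal_iff hH).2 hsH).trans_le hdim) (ENNReal.ofNat_lt_top (n := 2))
  have hdisc := eventually_measure_discarded_le hb hε hs.le hsHε (by linarith) hI hν one_pos
  filter_upwards [hν, eventually_one_le_measure_tilde_Tinf hIsub hνI.le hdisc] with j hνj hone
  refine le_trans ?_ (hνj.rpow_le_card hone)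
  gcongr
  exact one_le_two

theorem card_Tinf_rscale_le (hb : 0 ≤ b) (hHε : 0 ≤ H + ε) {J₀ : ℕ}
    (hI : ∀ j ≥ J₀, DuplicationBounds I H b ε j) (hJ : J₀ ≤ J) (ℓ : ℕ) :
    ((Tinf I H b ε (rscale b J ℓ)).card : ℝ) ≤ (2 : ℝ) ^ ((1 + b) ^ ℓ * (J : ℝ) * (H + ε)) :=
  calc ((Tinf I H b ε (rscale b J ℓ)).card : ℝ) ≤ (ND I H b ε (rscale b J ℓ)).card :=
        mod_cast card_Tinf_le_card_ND
    _ ≤ (2 : ℝ) ^ ((rscale b J ℓ : ℝ) * (H + ε)) :=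
        (hI _ (hJ.trans (le_rscale hb J ℓ))).card_ND_le
    _ ≤ (2 : ℝ) ^ ((1 + b) ^ ℓ * (J : ℝ) * (H + ε)) := by
        gcongr
        · exact one_le_two
        · exact rscale_le hb J ℓ

theorem eventually_rpow_le_card_Tinf_rscale (hIsub : I ⊆ Icc 0 1) (hH : 0 < H)
    (hdim : ENNReal.ofReal H ≤ dimH I) (hb : 0 < b) (hε : 0 < ε)
    (hI : ∀ᶠ j in atTop, DuplicationBounds I H b ε j) (J : ℕ) :
    ∀ᶠ ℓ : ℕ in atTop, (2 : ℝ) ^ ((1 + b) ^ ℓ * (J : ℝ) * (H - ε)) ≤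
      (Tinf I H b ε (rscale b J ℓ)).card := by
  rcases J.eq_zero_or_pos with rfl | hJ
  · have hne : I.Nonempty := nonempty_iff_ne_empty.2 fun h => by
      simp [h, hH.not_ge] at hdim
    have hmem := zero_mem_Tinf_zero (H := H) (b := b) (ε := ε) (dyadicHit_zero hIsub hne)
    refine Eventually.of_forall fun ℓ => ?_
    simpa [rscale] using Finset.one_le_card.2 ⟨0, hmem⟩
  · obtain ⟨s, hlo, hsH⟩ := exists_between (max_lt (sub_lt_self H hε) hH)
    obtain ⟨hs, hs0⟩ := max_lt_iff.1 hlo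
    filter_upwards [(tendsto_rscale hb hJ).eventually
        (eventually_rpow_le_card_Tinf hIsub hH hdim hb hε hI hsH),
      (tendsto_one_add_pow_mul_atTop hb hJ).eventually
        (eventually_mul_le_floor_mul hs0.le hs)] with ℓ hcard hexp
    exact (Real.rpow_le_rpow_of_exponent_le one_le_two hexp).trans hcard

end Cardinality

theorem card_Tinf_bounds_general {I : Set ℝ} {H b ε : ℝ} (hIsub : I ⊆ Icc 0 1) (hH : 0 < H)
    (hdim : ENNReal.ofReal H ≤ dimH I) (hb : 0 < b) (hε : 0 < ε) {J₀ : ℕ}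
    (hI : ∀ j ≥ J₀, DuplicationBounds I H b ε j) {J : ℕ} (hJ : J₀ ≤ J) :
    ∃ ℓ₀ : ℕ, ∀ ℓ ≥ ℓ₀,
      (2 : ℝ) ^ ((1 + b) ^ ℓ * (J : ℝ) * (H - ε)) ≤
          ((Tinf I H b ε (rscale b J ℓ)).card : ℝ) ∧
      ((Tinf I H b ε (rscale b J ℓ)).card : ℝ) ≤
          (2 : ℝ) ^ ((1 + b) ^ ℓ * (J : ℝ) * (H + ε)) := by
  have hlower := eventually_rpow_le_card_Tinf_rscale hIsub hH hdim hb hε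
    (eventually_atTop.2 ⟨J₀, hI⟩) J
  exact eventually_atTop.1 <| hlower.and <| Eventually.of_forall <|
    card_Tinf_rscale_le hb.le (by linarith) hI hJ

/-- there is `ℓ₀` such that for all `ℓ ≥ ℓ₀`,
`2^{(1+b)^ℓ J (H-ε)} ≤ #T_∞((1+b)^ℓ J,b,ε) ≤ 2^{(1+b)^ℓ J (H+ε)}`. -/
theorem card_Tinf_bounds
    (I : Set ℝ) (H : ℝ) (hIc : IsCompact I) (hIsub : I ⊆ Set.Icc 0 1) (hIne : I.Nonempty)
    (hHpos : 0 < H) (hdim : dimH I = ENNReal.ofReal H) (hbox : upperBoxDim I = H)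
    (b ε : ℝ) (hb : b ∈ Set.Ioo (0 : ℝ) 1) (hε : 0 < ε) (hbH : 0 < b * H - 5 * ε)
    (J₀ : ℕ)
    (hJ₀ : ∀ j ≥ J₀,
      ((2 : ℝ) ^ ((j : ℝ) * (H - 2 * ε)) ≤ ((ND I H b ε j).card : ℝ) ∧
        ((ND I H b ε j).card : ℝ) ≤ (2 : ℝ) ^ ((j : ℝ) * (H + ε))) ∧
      ((FD I H b ε j).card : ℝ) ≤ (2 : ℝ) ^ ((j : ℝ) * (H - 2 * ε)) ∧
      ((CB I b j (SD I H b ε j)).card : ℝ) ≤ (2 : ℝ) ^ ((j : ℝ) * (1 + b) * (H - 3 * ε)))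
    (J : ℕ) (hJ : J₀ ≤ J) :
    ∃ ℓ₀ : ℕ, ∀ ℓ ≥ ℓ₀,
      (2 : ℝ) ^ ((1 + b) ^ ℓ * (J : ℝ) * (H - ε)) ≤
          ((Tinf I H b ε (rscale b J ℓ)).card : ℝ) ∧
      ((Tinf I H b ε (rscale b J ℓ)).card : ℝ) ≤
          (2 : ℝ) ^ ((1 + b) ^ ℓ * (J : ℝ) * (H + ε)) := by
  exact card_Tinf_bounds_general hIsub hHpos hdim.ge hb.1 hε
    (fun j hj => ⟨(hJ₀ j hj).1.2, (hJ₀ j hj).2.1, (hJ₀ j hj).2.2⟩) hJ
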